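/- arXiv:1708.06605 — 2 statements merged into one kernel-verified Lean document; each statement's English description precedes it below -/
import Mathlib

section
/- Let λ > 0, let α be a real number with 0 < α < 1, and let x ∈ ℝ. Then the improper integral lim_{T→∞} (1/Γ(α)) ∫_{−T}^x sin(λτ) (x−τ)^{α−1} dτ exists and equals λ^{−α} sin(λx − απ/2); that is, the distributional differintegral of order α of sin(λz) is |λ|^{−α} sin(λz − απ/2). -/
open Real Filter Topology

/-!
Substituting `t = x - τ` turns `∫ e^(sτ) (x - τ)^(a - 1) dτ` into `e^(sx)` times a truncated Laplace
transform of `t^(a - 1)`. On the open half plane `0 < Re s` the full transform is `Γ(a) s^(-a)`, by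
the identity theorem. Integration by parts bounds the tail beyond `R` by a multiple of
`R^(Re a - 1) / |s|`, with no loss as `Re s → 0`, so both the bound and the value extend to the
imaginary axis, where the integral converges only conditionally. The sine is the imaginary part of
the case `s = iλ`.
-/

open MeasureTheory Set

section LaplaceTransform

lemma norm_cpow_mul_cexp_neg_mul {t : ℝ} (ht : 0 < t) (a r : ℂ) :
    ‖(t : ℂ) ^ a * Complex.exp (-(r * t))‖ = t ^ a.re * Real.exp (-(r.re * t)) := by
  rw [norm_mul, Complex.norm_cpow_eq_rpow_re_of_pos ht, Complex.norm_exp]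
  simp

lemma integrableOn_rpow_mul_exp_neg_mul_Ioi {s b : ℝ} (hs : -1 < s) (hb : 0 < b) :
    IntegrableOn (fun t : ℝ ↦ t ^ s * Real.exp (-(b * t))) (Ioi 0) := by
  simpa using integrableOn_rpow_mul_exp_neg_mul_rpow hs one_pos hb

variable {a r : ℂ}

lemma integrableOn_cpow_mul_cexp_neg_mul_Ioi (ha : -1 < a.re) (hr : 0 < r.re) :
    IntegrableOn (fun t : ℝ ↦ (t : ℂ) ^ a * Complex.exp (-(r * t))) (Ioi 0) := by
  refine (integrableOn_rpow_mul_exp_neg_mul_Ioi ha hr).mono' (by fun_prop) ?_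
  filter_upwards [ae_restrict_mem measurableSet_Ioi] with t ht
  exact (norm_cpow_mul_cexp_neg_mul ht a r).le

lemma differentiableAt_integral_cpow_mul_cexp_neg_mul_Ioi (ha : -1 < a.re) (hr : 0 < r.re) :
    DifferentiableAt ℂ
      (fun z : ℂ ↦ ∫ t : ℝ in Ioi 0, (t : ℂ) ^ a * Complex.exp (-(z * t))) r := by
  have hs : {z : ℂ | r.re / 2 < z.re} ∈ 𝓝 r :=
    (isOpen_lt continuous_const Complex.continuous_re).mem_nhds (half_lt_self hr)
  have hderiv (t : ℝ) (z : ℂ) : HasDerivAt (fun z : ℂ ↦ (t : ℂ) ^ a * Complex.exp (-(z * t)))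
      ((t : ℂ) ^ a * (Complex.exp (-(z * t)) * -(1 * t))) z :=
    (((hasDerivAt_id z).mul_const (t : ℂ)).neg.cexp).const_mul _
  refine (hasDerivAt_integral_of_dominated_loc_of_deriv_le (μ := volume.restrict (Ioi 0))
    (F := fun z (t : ℝ) ↦ (t : ℂ) ^ a * Complex.exp (-(z * t)))
    (F' := fun z (t : ℝ) ↦ (t : ℂ) ^ a * (Complex.exp (-(z * t)) * -(1 * t))) hs
    (.of_forall fun z ↦ by fun_prop) (integrableOn_cpow_mul_cexp_neg_mul_Ioi ha hr)
    (by fun_prop) ?_ (integrableOn_rpow_mul_exp_neg_mul_Ioi (s := a.re + 1) (by linarith)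
      (half_pos hr)) (.of_forall fun t z _ ↦ hderiv t z)).2.differentiableAt
  filter_upwards [ae_restrict_mem measurableSet_Ioi] with t (ht : 0 < t) z (hz : r.re / 2 < z.re)
  calc ‖(t : ℂ) ^ a * (Complex.exp (-(z * t)) * -(1 * t))‖
      = t ^ a.re * Real.exp (-(z.re * t)) * t := by
        rw [← mul_assoc, norm_mul, norm_cpow_mul_cexp_neg_mul ht, one_mul, norm_neg,
          Complex.norm_of_nonneg ht.le]
    _ = t ^ (a.re + 1) * Real.exp (-(z.re * t)) := by
        rw [rpow_add_one ht.ne', mul_right_comm]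
    _ ≤ t ^ (a.re + 1) * Real.exp (-(r.re / 2 * t)) := by gcongr

theorem integral_cpow_mul_cexp_neg_mul_Ioi (ha : 0 < a.re) (hr : 0 < r.re) :
    ∫ t : ℝ in Ioi 0, (t : ℂ) ^ (a - 1) * Complex.exp (-(r * t)) =
      Complex.Gamma a * r ^ (-a) := by
  set U : Set ℂ := {z | 0 < z.re}
  have hU : IsOpen U := isOpen_lt continuous_const Complex.continuous_re
  have hlhs : AnalyticOnNhd ℂ
      (fun z ↦ ∫ t : ℝ in Ioi 0, (t : ℂ) ^ (a - 1) * Complex.exp (-(z * t))) U :=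
    DifferentiableOn.analyticOnNhd (fun z hz ↦
      (differentiableAt_integral_cpow_mul_cexp_neg_mul_Ioi (by simpa) hz).differentiableWithinAt) hU
  have hrhs : AnalyticOnNhd ℂ (fun z ↦ Complex.Gamma a * z ^ (-a)) U :=
    DifferentiableOn.analyticOnNhd (fun z hz ↦
      ((differentiableAt_id.cpow_const (.inl hz)).const_mul _).differentiableWithinAt) hU
  have hreal (s : ℝ) (hs : 0 < s) :
      ∫ t : ℝ in Ioi 0, (t : ℂ) ^ (a - 1) * Complex.exp (-(s * t)) =
        Complex.Gamma a * (s : ℂ) ^ (-a) := by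
    rw [Complex.integral_cpow_mul_exp_neg_mul_Ioi ha hs, mul_comm, one_div,
      Complex.inv_cpow _ _ (by simp [Complex.arg_ofReal_of_nonneg hs.le, pi_ne_zero.symm]),
      Complex.cpow_neg]
  have hofReal : Tendsto ((↑) : ℝ → ℂ) (𝓝[>] 1) (𝓝[≠] 1) :=
    tendsto_nhdsWithin_iff.2 ⟨(Complex.continuous_ofReal.tendsto' 1 1 (by simp)).mono_left
      nhdsWithin_le_nhds, eventually_nhdsWithin_of_forall fun s hs ↦ by simpa using! ne_of_gt hs⟩
  have hfreq : ∃ᶠ z in 𝓝[≠] (1 : ℂ),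
      ∫ t : ℝ in Ioi 0, (t : ℂ) ^ (a - 1) * Complex.exp (-(z * t)) = Complex.Gamma a * z ^ (-a) :=
    hofReal.frequently (Eventually.frequently
      (eventually_nhdsWithin_of_forall fun s hs ↦ hreal s (one_pos.trans hs)))
  exact hlhs.eqOn_of_preconnected_of_frequently_eq hrhs
    (convex_halfSpace_re_gt 0).isPreconnected (by simp [U]) hfreq hr

lemma norm_cexp_neg_mul_le_one {t : ℝ} (hr : 0 ≤ r.re) (ht : 0 ≤ t) :
    ‖Complex.exp (-(r * t))‖ ≤ 1 := by
  rw [Complex.norm_exp, exp_le_one_iff]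
  simpa using mul_nonneg hr ht

lemma norm_integral_Ioi_mul_cexp_neg_mul_le {u u' : ℝ → ℂ} {R : ℝ} (hr : 0 ≤ r.re) (hr₀ : r ≠ 0)
    (hR : 0 ≤ R) (hcont : ContinuousWithinAt u (Ioi R) R)
    (hderiv : ∀ t ∈ Ioi R, HasDerivAt u (u' t) t) (hu : Tendsto u atTop (𝓝 0))
    (hu' : IntegrableOn u' (Ioi R))
    (hint : IntegrableOn (fun t : ℝ ↦ u t * Complex.exp (-(r * t))) (Ioi R)) :
    ‖∫ t in Ioi R, u t * Complex.exp (-(r * t))‖ ≤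
      (‖u R‖ + ∫ t in Ioi R, ‖u' t‖) * ‖r‖⁻¹ := by
  set v : ℝ → ℂ := fun t ↦ Complex.exp (-(r * t)) * (-r)⁻¹
  have hv (t : ℝ) : HasDerivAt v (Complex.exp (-(r * t))) t := by
    have h := (((hasDerivAt_id t).ofReal_comp.const_mul r).neg.cexp).mul_const (-r)⁻¹
    simpa [v, mul_assoc, hr₀] using! h
  have hv_le (t : ℝ) (ht : R ≤ t) : ‖v t‖ ≤ ‖r‖⁻¹ := by
    simpa [v] using mul_le_of_le_one_left (by positivity)
      (norm_cexp_neg_mul_le_one hr (hR.trans ht))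
  have hu'v_le : ∀ᵐ t ∂volume.restrict (Ioi R), ‖u' t * v t‖ ≤ ‖u' t‖ * ‖r‖⁻¹ := by
    filter_upwards [ae_restrict_mem measurableSet_Ioi] with t ht
    grw [norm_mul, hv_le t (le_of_lt ht)]
  have hu'v : IntegrableOn (u' * v) (Ioi R) :=
    (hu'.norm.mul_const _).mono' (hu'.1.mul (by fun_prop)) hu'v_le
  have huv : Tendsto (u * v) atTop (𝓝 0) :=
    hu.zero_mul_isBoundedUnder_le (isBoundedUnder_of_eventually_le
      ((eventually_ge_atTop R).mono hv_le))
  rw [integral_Ioi_mul_deriv_eq_deriv_mul hderiv (fun t _ ↦ hv t) hint hu'v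
    (hcont.mul (hv R).continuousAt.continuousWithinAt) huv, zero_sub, add_mul, ← integral_mul_const]
  refine (norm_sub_le _ _).trans (add_le_add ?_
    (norm_integral_le_of_norm_le (hu'.norm.mul_const _) hu'v_le))
  grw [norm_neg, Pi.mul_apply, norm_mul, hv_le R le_rfl]

lemma norm_integral_Ioi_cpow_mul_cexp_neg_mul_le {R : ℝ} (ha : -1 < a.re) (ha' : a.re < 0)
    (hr : 0 < r.re) (hR : 0 < R) :
    ‖∫ t : ℝ in Ioi R, (t : ℂ) ^ a * Complex.exp (-(r * t))‖ ≤
      (1 + ‖a‖ / -a.re) * R ^ a.re * ‖r‖⁻¹ := by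
  have ha₀ : a ≠ 0 := by rintro rfl; simp at ha'
  have hr₀ : r ≠ 0 := by rintro rfl; simp at hr
  have hderiv (t : ℝ) (ht : R ≤ t) : HasDerivAt (fun t : ℝ ↦ (t : ℂ) ^ a) (a * t ^ (a - 1)) t :=
    hasDerivAt_ofReal_cpow_const (hR.trans_le ht).ne' ha₀
  have hre : (a - 1).re < -1 := by rw [Complex.sub_re, Complex.one_re]; linarith
  have hlim : Tendsto (fun t : ℝ ↦ (t : ℂ) ^ a) atTop (𝓝 0) := by
    refine squeeze_zero_norm' ?_ (by simpa using tendsto_rpow_neg_atTop (neg_pos.2 ha'))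
    filter_upwards [eventually_gt_atTop 0] with t ht
    exact (Complex.norm_cpow_eq_rpow_re_of_pos ht a).le
  have hvar : ∫ t : ℝ in Ioi R, ‖a * (t : ℂ) ^ (a - 1)‖ = ‖a‖ / -a.re * R ^ a.re := by
    calc ∫ t : ℝ in Ioi R, ‖a * (t : ℂ) ^ (a - 1)‖
        = ∫ t : ℝ in Ioi R, ‖a‖ * t ^ (a.re - 1) :=
          setIntegral_congr_fun measurableSet_Ioi fun t ht ↦ by
            simp [Complex.norm_cpow_eq_rpow_re_of_pos (hR.trans ht)]
      _ = ‖a‖ / -a.re * R ^ a.re := by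
          rw [integral_const_mul, integral_Ioi_rpow_of_lt (by linarith) hR, sub_add_cancel]
          ring
  have h := norm_integral_Ioi_mul_cexp_neg_mul_le hr.le hr₀ hR.le
    (hderiv R le_rfl).continuousAt.continuousWithinAt (fun t ht ↦ hderiv t (le_of_lt ht)) hlim
    ((integrableOn_Ioi_cpow_of_lt hre hR).const_mul a)
    ((integrableOn_cpow_mul_cexp_neg_mul_Ioi ha hr).mono_set (Ioi_subset_Ioi hR.le))
  rwa [hvar, Complex.norm_cpow_eq_rpow_re_of_pos hR, ← one_add_mul] at h

lemma continuousOn_integral_cpow_mul_cexp_neg_mul {R : ℝ} (ha : -1 < a.re) (hR : 0 ≤ R) :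
    ContinuousOn (fun z : ℂ ↦ ∫ t in (0 : ℝ)..R, (t : ℂ) ^ a * Complex.exp (-(z * t)))
      {z | 0 ≤ z.re} := by
  intro r _
  refine intervalIntegral.continuousWithinAt_of_dominated_interval (.of_forall fun z ↦ by fun_prop)
    (eventually_nhdsWithin_of_forall fun z hz ↦ .of_forall fun t ht ↦ ?_)
    (intervalIntegral.intervalIntegrable_cpow' ha).norm
    (.of_forall fun t _ ↦ Continuous.continuousWithinAt (by fun_prop))
  rw [uIoc_of_le hR] at ht
  rw [norm_mul]
  exact mul_le_of_le_one_right (norm_nonneg _) (norm_cexp_neg_mul_le_one hz ht.1.le)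

lemma norm_integral_cpow_mul_cexp_neg_mul_sub_le {R : ℝ} (ha : 0 < a.re) (ha' : a.re < 1)
    (hr : 0 ≤ r.re) (hr₀ : r ≠ 0) (hR : 0 < R) :
    ‖(∫ t in (0 : ℝ)..R, (t : ℂ) ^ (a - 1) * Complex.exp (-(r * t))) -
        Complex.Gamma a * r ^ (-a)‖ ≤
      (1 + ‖a - 1‖ / -(a - 1).re) * R ^ (a - 1).re * ‖r‖⁻¹ := by
  have hb : -1 < (a - 1).re := by simpa
  have hb' : (a - 1).re < 0 := by simpa
  have hclosure : closure {z : ℂ | 0 < z.re} = {z | 0 ≤ z.re} := Complex.closure_setOfPred_lt_re 0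
  have hslit : r ∈ Complex.slitPlane := by
    rw [Complex.mem_slitPlane_iff]
    exact hr.lt_or_eq.imp_right fun h him ↦ hr₀ (Complex.ext h.symm him)
  have htrunc : ContinuousWithinAt (fun z : ℂ ↦
      ∫ t in (0 : ℝ)..R, (t : ℂ) ^ (a - 1) * Complex.exp (-(z * t))) {z | 0 < z.re} r :=
    (continuousOn_integral_cpow_mul_cexp_neg_mul hb hR.le r hr).mono fun z (hz : 0 < z.re) ↦ hz.le
  have hpow : ContinuousWithinAt (fun z : ℂ ↦ Complex.Gamma a * z ^ (-a)) {z | 0 < z.re} r :=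
    ((continuousAt_cpow_const hslit).const_mul _).continuousWithinAt
  have hbound : ContinuousWithinAt (fun z : ℂ ↦
      (1 + ‖a - 1‖ / -(a - 1).re) * R ^ (a - 1).re * ‖z‖⁻¹) {z | 0 < z.re} r :=
    continuousWithinAt_const.mul (continuousWithinAt_id.norm.inv₀ (norm_ne_zero_iff.2 hr₀))
  refine (htrunc.sub hpow).norm.closure_le (hclosure.ge hr) hbound fun z hz ↦ ?_
  rw [Pi.sub_apply, ← integral_cpow_mul_cexp_neg_mul_Ioi ha hz,
    ← intervalIntegral.integral_Ioi_sub_Ioi (integrableOn_cpow_mul_cexp_neg_mul_Ioi hb hz) hR.le,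
    sub_sub_cancel_left, norm_neg]
  exact norm_integral_Ioi_cpow_mul_cexp_neg_mul_le hb hb' hz hR

theorem tendsto_integral_cpow_mul_cexp_neg_mul (ha : 0 < a.re) (ha' : a.re < 1) (hr : 0 ≤ r.re)
    (hr₀ : r ≠ 0) :
    Tendsto (fun R : ℝ ↦ ∫ t in (0 : ℝ)..R, (t : ℂ) ^ (a - 1) * Complex.exp (-(r * t))) atTop
      (𝓝 (Complex.Gamma a * r ^ (-a))) := by
  have hrate : Tendsto (fun R : ℝ ↦ (1 + ‖a - 1‖ / -(a - 1).re) * R ^ (a - 1).re * ‖r‖⁻¹) atTop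
      (𝓝 0) := by
    have h : Tendsto (fun R : ℝ ↦ R ^ (a - 1).re) atTop (𝓝 0) := by
      simpa using tendsto_rpow_neg_atTop (y := 1 - a.re) (by linarith)
    simpa using (h.const_mul _).mul_const _
  refine tendsto_iff_norm_sub_tendsto_zero.2
    (squeeze_zero' (.of_forall fun _ ↦ norm_nonneg _) ?_ hrate)
  filter_upwards [eventually_gt_atTop 0] with R hR
  exact norm_integral_cpow_mul_cexp_neg_mul_sub_le ha ha' hr hr₀ hR

end LaplaceTransform

theorem tendsto_integral_cexp_mul_sub_cpow {a s : ℂ} (ha : 0 < a.re) (ha' : a.re < 1)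
    (hs : 0 ≤ s.re) (hs₀ : s ≠ 0) (x : ℝ) :
    Tendsto (fun T : ℝ ↦ ∫ τ in (-T)..x, Complex.exp (s * τ) * ((x - τ : ℝ) : ℂ) ^ (a - 1)) atTop
      (𝓝 (Complex.Gamma a * (Complex.exp (s * x) * s ^ (-a)))) := by
  have hlim := ((tendsto_integral_cpow_mul_cexp_neg_mul ha ha' hs hs₀).comp
    (tendsto_atTop_add_const_left atTop x tendsto_id)).const_mul (Complex.exp (s * x))
  rw [mul_left_comm] at hlim
  refine hlim.congr fun T ↦ ?_
  calc Complex.exp (s * x) *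
        ∫ t in (0 : ℝ)..x + T, (t : ℂ) ^ (a - 1) * Complex.exp (-(s * t))
      = ∫ t in (0 : ℝ)..x + T, Complex.exp (s * (x - t : ℝ)) * (t : ℂ) ^ (a - 1) := by
        rw [← intervalIntegral.integral_const_mul]
        refine intervalIntegral.integral_congr fun t _ ↦ ?_
        have hexp : Complex.exp (s * (x - t : ℝ)) =
            Complex.exp (s * x) * Complex.exp (-(s * t)) := by
          rw [← Complex.exp_add, Complex.ofReal_sub, mul_sub, sub_eq_add_neg]
        rw [hexp]
        ring
    _ = ∫ τ in (-T)..x, Complex.exp (s * τ) * ((x - τ : ℝ) : ℂ) ^ (a - 1) := by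
        simpa using (intervalIntegral.integral_comp_sub_left (a := -T) (b := x)
          (fun t ↦ Complex.exp (s * (x - t : ℝ)) * (t : ℂ) ^ (a - 1)) x).symm

lemma im_integral_cexp_mul_sub_cpow {α T x : ℝ} (hα : 0 < α) (hT : -T ≤ x) (lam : ℝ) :
    (∫ τ in (-T)..x,
      Complex.exp (lam * Complex.I * τ) * ((x - τ : ℝ) : ℂ) ^ ((α : ℂ) - 1)).im =
      ∫ τ in (-T)..x, Real.sin (lam * τ) * (x - τ) ^ (α - 1) := by
  have hpow : IntervalIntegrable (fun τ : ℝ ↦ ((x - τ : ℝ) : ℂ) ^ ((α : ℂ) - 1)) volume (-T) x := by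
    have h := (intervalIntegral.intervalIntegrable_cpow' (a := x + T) (b := 0)
      (r := (α : ℂ) - 1) (by simpa)).comp_sub_left x
    simpa using h
  have hint : IntervalIntegrable (fun τ : ℝ ↦
      Complex.exp (lam * Complex.I * τ) * ((x - τ : ℝ) : ℂ) ^ ((α : ℂ) - 1)) volume (-T) x :=
    hpow.continuousOn_mul (by fun_prop)
  refine (intervalIntegral.intervalIntegral_im hint).symm.trans
    (intervalIntegral.integral_congr fun τ hτ ↦ ?_)
  rw [uIcc_of_le hT] at hτ
  have hexp : Complex.exp (lam * Complex.I * τ) = Complex.exp ((lam * τ : ℝ) * Complex.I) := by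
    push_cast; ring_nf
  have hcpow : ((x - τ : ℝ) : ℂ) ^ ((α : ℂ) - 1) = (((x - τ) ^ (α - 1) : ℝ) : ℂ) := by
    rw [Complex.ofReal_cpow (sub_nonneg.2 hτ.2), Complex.ofReal_sub α, Complex.ofReal_one]
  simp only [hexp, hcpow, RCLike.im_eq_complex_im, Complex.im_mul_ofReal,
    Complex.exp_ofReal_mul_I_im]

lemma arg_ofReal_mul_I (l : ℝ) : Complex.arg (l * Complex.I) = l.sign * (π / 2) := by
  rcases lt_trichotomy l 0 with hl | rfl | hl
  · rw [Complex.arg_eq_neg_pi_div_two_iff.2 (by simpa), sign_of_neg hl, neg_one_mul]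
  · simp
  · rw [Complex.arg_eq_pi_div_two_iff.2 (by simpa), sign_of_pos hl, one_mul]

lemma im_cexp_mul_I_mul_cpow_ofReal (θ y : ℝ) (z : ℂ) :
    (Complex.exp (θ * Complex.I) * z ^ (y : ℂ)).im = ‖z‖ ^ y * Real.sin (θ + z.arg * y) := by
  rw [Complex.mul_im, Complex.exp_ofReal_mul_I_re, Complex.exp_ofReal_mul_I_im,
    Complex.cpow_ofReal_re, Complex.cpow_ofReal_im, Real.sin_add]
  ring

/-- The sign of `lam` enters because the phase of `(i lam)^(-α)` is `-α arg (i lam)`. -/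
theorem differintegral_sin_general (lam α x : ℝ) (hlam : lam ≠ 0) (hα0 : 0 < α) (hα1 : α < 1) :
    Tendsto (fun T : ℝ => (1 / Real.Gamma α) * ∫ τ in (-T)..x,
        Real.sin (lam * τ) * (x - τ) ^ (α - 1)) atTop
      (𝓝 (|lam| ^ (-α) * Real.sin (lam * x - lam.sign * (α * π / 2)))) := by
  have hexp := tendsto_integral_cexp_mul_sub_cpow (a := α) (s := lam * Complex.I) (by simpa)
    (by simpa) (by simp) (by simpa) x
  have him := ((Complex.continuous_im.tendsto _).comp hexp).const_mul (1 / Real.Gamma α)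
  have hval : 1 / Real.Gamma α * (Complex.Gamma α *
      (Complex.exp (lam * Complex.I * x) * (lam * Complex.I) ^ (-(α : ℂ)))).im =
      |lam| ^ (-α) * Real.sin (lam * x - lam.sign * (α * π / 2)) := by
    have hphase : lam * Complex.I * x = (lam * x : ℝ) * Complex.I := by push_cast; ring
    rw [Complex.Gamma_ofReal, Complex.im_ofReal_mul, one_div,
      inv_mul_cancel_left₀ (Real.Gamma_pos_of_pos hα0).ne', hphase, ← Complex.ofReal_neg,
      im_cexp_mul_I_mul_cpow_ofReal, arg_ofReal_mul_I]
    simp only [norm_mul, Complex.norm_real, Complex.norm_I, mul_one, Real.norm_eq_abs]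
    ring_nf
  rw [hval] at him
  refine him.congr' ?_
  filter_upwards [eventually_ge_atTop (-x)] with T hT
  rw [Function.comp_apply, im_integral_cexp_mul_sub_cpow hα0 (by linarith)]

/-- The improper distributional differintegral of order `α ∈ (0,1)` of `sin(λz)` exists
and equals `λ^(−α) sin(λz − απ/2)`. -/
theorem differintegral_sin (lam α x : ℝ) (hlam : 0 < lam) (hα0 : 0 < α) (hα1 : α < 1) :
    Tendsto (fun T : ℝ => (1 / Real.Gamma α) * ∫ τ in (-T)..x,
        Real.sin (lam * τ) * (x - τ) ^ (α - 1)) atTop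
      (𝓝 (lam ^ (-α) * Real.sin (lam * x - α * π / 2))) := by
  simpa [abs_of_pos hlam, sign_of_pos hlam] using
    differintegral_sin_general lam α x hlam.ne' hα0 hα1
end

section
/- Let λ > 0, let α be a real number with 0 < α < 1, and let x ∈ ℝ. Then the improper integral lim_{T→∞} (1/Γ(α)) ∫_{−T}^x cos(λτ) (x−τ)^{α−1} dτ exists and equals λ^{−α} cos(λx − απ/2); that is, the distributional differintegral of order α of cos(λz) is |λ|^{−α} cos(λz − απ/2). -/
open Real Filter Topology

/-!
Write `F_R(z) = ∫₀ᴿ t ^ (a - 1) * exp (-z * t) dt`. The substitution `u = x - τ` turns the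
differintegral of `exp (w * τ)` truncated at `-T` into `exp (w * x) * F_{x + T}(w) / Γ(a)`, so it
suffices that `z ^ a * F_R(z) → Γ(a)` as `R → ∞` for every `z ≠ 0` in the closed right half-plane.
At `z = 1` this is Euler's integral. Integration by parts gives
`d/dz (z ^ a * F_R(z)) = R ^ a * z ^ (a - 1) * exp (-z * R)`, and integrating this along the segment
from `z` to `1`, where the real part at parameter `s` is at least `s`, shows that the values at `z`
and at `1` differ by `O(R ^ (Re a - 1))`. The cosine is the mean of the cases `w = ± λ * I`.
-/

section Cpow

lemma cpow_sub_one_mul_self {a : ℂ} (ha : a ≠ 0) (z : ℂ) : z ^ (a - 1) * z = z ^ a := by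
  obtain rfl | hz := eq_or_ne z 0
  · simp [ha]
  · rw [Complex.cpow_sub _ _ hz, Complex.cpow_one, div_mul_cancel₀ _ hz]

lemma ofReal_mul_cpow {r : ℝ} (hr : 0 < r) {z : ℂ} (hz : z ≠ 0) (s : ℂ) :
    (r * z) ^ s = (r : ℂ) ^ s * z ^ s := by
  have hr' : (r : ℂ) ≠ 0 := Complex.ofReal_ne_zero.2 hr.ne'
  rw [Complex.cpow_def_of_ne_zero (mul_ne_zero hr' hz), Complex.log_ofReal_mul hr hz,
    Complex.ofReal_log hr.le, add_mul, Complex.exp_add, ← Complex.cpow_def_of_ne_zero hr',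
    ← Complex.cpow_def_of_ne_zero hz]

lemma I_cpow (s : ℂ) : Complex.I ^ s = Complex.exp (π / 2 * s * Complex.I) := by
  rw [Complex.cpow_def_of_ne_zero Complex.I_ne_zero, Complex.log_I, mul_right_comm]

lemma neg_I_cpow (s : ℂ) : (-Complex.I) ^ s = Complex.exp (-(π / 2 * s) * Complex.I) := by
  rw [Complex.cpow_def_of_ne_zero (neg_ne_zero.2 Complex.I_ne_zero), Complex.log_neg_I]
  ring_nf

end Cpow

section Segment

variable {z : ℂ}

lemma lineMap_one_mem_slitPlane (hz : z ∈ Complex.slitPlane) {s : ℝ} (hs : s ∈ Set.Icc 0 1) :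
    AffineMap.lineMap z 1 s ∈ Complex.slitPlane := by
  refine Complex.starConvex_one_slitPlane.segment_subset hz ?_
  rw [segment_symm, segment_eq_image_lineMap]
  exact Set.mem_image_of_mem _ hs

lemma le_re_lineMap_one (hz : 0 ≤ z.re) {s : ℝ} (hs : s ≤ 1) :
    s ≤ (AffineMap.lineMap z 1 s : ℂ).re := by
  have : 0 ≤ (1 - s) * z.re := mul_nonneg (sub_nonneg.2 hs) hz
  rw [AffineMap.lineMap_apply_module, Complex.add_re, Complex.smul_re, Complex.smul_re,
    Complex.one_re, smul_eq_mul, smul_eq_mul]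
  linarith

lemma exists_norm_lineMap_one_cpow_le (hz : z ∈ Complex.slitPlane) (b : ℂ) :
    ∃ M : ℝ, ∀ s ∈ Set.Icc (0 : ℝ) 1, ‖(AffineMap.lineMap z 1 s : ℂ) ^ b‖ ≤ M := by
  refine isCompact_Icc.exists_bound_of_continuousOn fun s hs ↦ ?_
  have hline : ContinuousAt (AffineMap.lineMap z (1 : ℂ) : ℝ → ℂ) s :=
    AffineMap.lineMap_continuous.continuousAt
  exact (hline.cpow continuousAt_const (lineMap_one_mem_slitPlane hz hs)).continuousWithinAt

lemma norm_sub_le_div_of_norm_deriv_le_mul_exp {E : Type*} [NormedAddCommGroup E]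
    [NormedSpace ℝ E] {f f' : ℝ → E} {K R : ℝ} (hR : 0 < R)
    (hf : ∀ s ∈ Set.Icc (0 : ℝ) 1, HasDerivAt f (f' s) s)
    (hf' : ∀ s ∈ Set.Icc (0 : ℝ) 1, ‖f' s‖ ≤ K * Real.exp (-R * s)) :
    ‖f 1 - f 0‖ ≤ K / R := by
  have hK : 0 ≤ K := by simpa using (norm_nonneg _).trans (hf' 0 (by simp))
  have hB (s : ℝ) : HasDerivAt (fun s ↦ K / R * (1 - Real.exp (-R * s)))
      (K * Real.exp (-R * s)) s := by
    convert! ((((hasDerivAt_id s).const_mul (-R)).exp).const_sub 1).const_mul (K / R) using 1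
    simp only [id]
    field_simp
  have hsub := image_norm_le_of_norm_deriv_right_le_deriv_boundary (f := fun s ↦ f s - f 0)
    (fun s hs ↦ ((hf s hs).sub_const _).continuousAt.continuousWithinAt)
    (fun s hs ↦ ((hf s (Set.Ico_subset_Icc_self hs)).sub_const _).hasDerivWithinAt)
    (by simp) hB (fun s hs ↦ hf' s (Set.Ico_subset_Icc_self hs))
    (Set.right_mem_Icc.2 zero_le_one)
  refine hsub.trans (mul_le_of_le_one_right (by positivity) ?_)
  linarith [Real.exp_pos (-R * 1)]

end Segment

/-- The Laplace transform of `t ^ (a - 1)` truncated at `R`. In terms of the lower incomplete Gamma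
function, `z ^ a * truncatedLaplaceCpow a R z = γ(a, R * z)` for `R > 0` and `Re a > 0`; without the
factor `z ^ a` it is entire in `z`. -/
noncomputable def truncatedLaplaceCpow (a : ℂ) (R : ℝ) (z : ℂ) : ℂ :=
  ∫ t in (0 : ℝ)..R, (t : ℂ) ^ (a - 1) * Complex.exp (-z * t)

section TruncatedLaplace

variable {a z : ℂ} {R : ℝ}

lemma intervalIntegrable_cpow_mul_cexp (ha : -1 < a.re) (z : ℂ) (p q : ℝ) :
    IntervalIntegrable (fun t : ℝ ↦ (t : ℂ) ^ a * Complex.exp (-z * t))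
      MeasureTheory.volume p q :=
  (intervalIntegral.intervalIntegrable_cpow' ha).mul_continuousOn (by fun_prop)

lemma norm_cexp_neg_mul_ofReal_le {w : ℂ} {t ρ r : ℝ} (hw : ‖w‖ ≤ ρ) (ht : |t| ≤ r) :
    ‖Complex.exp (-w * t)‖ ≤ Real.exp (ρ * r) := by
  refine (Complex.norm_exp_le_exp_norm _).trans (Real.exp_le_exp.2 ?_)
  rw [norm_mul, norm_neg, Complex.norm_real, Real.norm_eq_abs]
  gcongr
  exact (norm_nonneg w).trans hw

lemma hasDerivAt_truncatedLaplaceCpow (ha : 0 < a.re) (R : ℝ) (z : ℂ) :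
    HasDerivAt (truncatedLaplaceCpow a R) (-truncatedLaplaceCpow (a + 1) R z) z := by
  have hint (w : ℂ) := intervalIntegrable_cpow_mul_cexp (a := a - 1) (by simpa using ha) w 0 R
  have hint' := intervalIntegrable_cpow_mul_cexp (a := a) (by linarith) z 0 R
  have hbound : IntervalIntegrable (fun t : ℝ ↦ ‖(t : ℂ) ^ a‖ * Real.exp ((‖z‖ + 1) * |R|))
      MeasureTheory.volume 0 R :=
    (intervalIntegral.intervalIntegrable_cpow' (by linarith)).norm.mul_const _
  have hderiv := (intervalIntegral.hasDerivAt_integral_of_dominated_loc_of_deriv_le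
    (F := fun (w : ℂ) (t : ℝ) ↦ (t : ℂ) ^ (a - 1) * Complex.exp (-w * t))
    (F' := fun (w : ℂ) (t : ℝ) ↦ -((t : ℂ) ^ a * Complex.exp (-w * t)))
    (Metric.ball_mem_nhds z one_pos) (.of_forall fun w ↦ (hint w).def'.aestronglyMeasurable)
    (hint z) hint'.neg.def'.aestronglyMeasurable
    (.of_forall fun t ht w hw ↦ ?_) hbound (.of_forall fun t _ w _ ↦ ?_)).2
  · convert! hderiv using 1
    simp only [truncatedLaplaceCpow, add_sub_cancel_right, intervalIntegral.integral_neg]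
  · have ht' : |t| ≤ |R| := by
      simpa using Set.abs_sub_left_of_mem_uIcc (Set.uIoc_subset_uIcc ht)
    rw [norm_neg, norm_mul]
    gcongr
    exact norm_cexp_neg_mul_ofReal_le (norm_lt_of_mem_ball hw).le ht'
  · convert! ((hasDerivAt_neg w).mul_const (t : ℂ)).cexp.const_mul ((t : ℂ) ^ (a - 1)) using 1
    rw [← cpow_sub_one_mul_self (Complex.ne_zero_of_re_pos ha)]
    ring

lemma mul_truncatedLaplaceCpow_sub (ha : 0 < a.re) (hR : 0 ≤ R) (z : ℂ) :
    a * truncatedLaplaceCpow a R z - z * truncatedLaplaceCpow (a + 1) R z =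
      (R : ℂ) ^ a * Complex.exp (-z * R) := by
  have ha0 := Complex.ne_zero_of_re_pos ha
  have hint₁ :=
    (intervalIntegrable_cpow_mul_cexp (a := a - 1) (by simpa using ha) z 0 R).const_mul a
  have hint₂ := (intervalIntegrable_cpow_mul_cexp (a := a) (by linarith) z 0 R).const_mul z
  have hderiv (t : ℝ) (ht : t ∈ Set.Ioo 0 R) :
      HasDerivAt (fun t : ℝ ↦ (t : ℂ) ^ a * Complex.exp (-z * t))
        (a * ((t : ℂ) ^ (a - 1) * Complex.exp (-z * t)) -
          z * ((t : ℂ) ^ a * Complex.exp (-z * t))) t := by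
    convert! (hasDerivAt_ofReal_cpow_const ht.1.ne' ha0).mul
      ((hasDerivAt_id t).ofReal_comp.const_mul (-z)).cexp using 1
    push_cast [id]
    ring
  have hcont : Continuous fun t : ℝ ↦ (t : ℂ) ^ a * Complex.exp (-z * t) :=
    (Complex.continuous_ofReal_cpow_const ha).mul (by fun_prop)
  have hftc := intervalIntegral.integral_eq_sub_of_hasDerivAt_of_le hR hcont.continuousOn hderiv
    (hint₁.sub hint₂)
  rw [intervalIntegral.integral_sub hint₁ hint₂, intervalIntegral.integral_const_mul,
    intervalIntegral.integral_const_mul] at hftc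
  simpa [truncatedLaplaceCpow, Complex.zero_cpow ha0] using hftc

lemma hasDerivAt_cpow_mul_truncatedLaplaceCpow (ha : 0 < a.re) (hR : 0 ≤ R)
    (hz : z ∈ Complex.slitPlane) :
    HasDerivAt (fun z ↦ z ^ a * truncatedLaplaceCpow a R z)
      ((R : ℂ) ^ a * z ^ (a - 1) * Complex.exp (-z * R)) z := by
  convert! ((hasDerivAt_id z).cpow_const hz).mul (hasDerivAt_truncatedLaplaceCpow ha R z) using 1
  rw [mul_right_comm, ← mul_truncatedLaplaceCpow_sub ha hR z, id,
    ← cpow_sub_one_mul_self (Complex.ne_zero_of_re_pos ha) z]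
  ring

lemma exists_norm_truncatedLaplaceCpow_one_sub_le (ha : 0 < a.re) (hz : 0 ≤ z.re)
    (hz' : z ∈ Complex.slitPlane) :
    ∃ C : ℝ, ∀ R : ℝ, 0 < R →
      ‖truncatedLaplaceCpow a R 1 - z ^ a * truncatedLaplaceCpow a R z‖ ≤ C * R ^ (a.re - 1) := by
  obtain ⟨M, hM⟩ := exists_norm_lineMap_one_cpow_le hz' (a - 1)
  have hM0 : 0 ≤ M := (norm_nonneg _).trans (hM 0 (by simp))
  refine ⟨M * ‖1 - z‖, fun R hR ↦ ?_⟩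
  let w : ℝ → ℂ := AffineMap.lineMap z 1
  have hderiv (s : ℝ) (hs : s ∈ Set.Icc 0 1) :
      HasDerivAt (fun s ↦ w s ^ a * truncatedLaplaceCpow a R (w s))
        ((R : ℂ) ^ a * w s ^ (a - 1) * Complex.exp (-w s * R) * (1 - z)) s :=
    (hasDerivAt_cpow_mul_truncatedLaplaceCpow ha hR.le (lineMap_one_mem_slitPlane hz' hs)).comp s
      AffineMap.hasDerivAt_lineMap
  have hdecay (s : ℝ) (hs : s ∈ Set.Icc 0 1) : ‖Complex.exp (-w s * R)‖ ≤ Real.exp (-R * s) := by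
    rw [Complex.norm_exp, Complex.re_mul_ofReal, Complex.neg_re]
    have := mul_le_mul_of_nonneg_left (le_re_lineMap_one hz hs.2) hR.le
    exact Real.exp_le_exp.2 (by linarith)
  have hbound (s : ℝ) (hs : s ∈ Set.Icc 0 1) :
      ‖(R : ℂ) ^ a * w s ^ (a - 1) * Complex.exp (-w s * R) * (1 - z)‖ ≤
        R ^ a.re * M * ‖1 - z‖ * Real.exp (-R * s) := by
    rw [norm_mul, norm_mul, norm_mul, Complex.norm_cpow_eq_rpow_re_of_pos hR,
      mul_right_comm (_ * M)]
    gcongr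
    exacts [hM s hs, hdecay s hs]
  calc ‖truncatedLaplaceCpow a R 1 - z ^ a * truncatedLaplaceCpow a R z‖
      ≤ R ^ a.re * M * ‖1 - z‖ / R := by
        simpa [w] using norm_sub_le_div_of_norm_deriv_le_mul_exp hR hderiv hbound
    _ = M * ‖1 - z‖ * R ^ (a.re - 1) := by
        rw [rpow_sub_one hR.ne']
        ring

lemma tendsto_truncatedLaplaceCpow_one (ha : 0 < a.re) :
    Tendsto (fun R ↦ truncatedLaplaceCpow a R 1) atTop (𝓝 (Complex.Gamma a)) := by
  rw [Complex.Gamma_eq_integral ha, Complex.GammaIntegral]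
  refine (MeasureTheory.intervalIntegral_tendsto_integral_Ioi 0
    (Complex.GammaIntegral_convergent ha) tendsto_id).congr fun R ↦ ?_
  simp [truncatedLaplaceCpow, mul_comm]

lemma tendsto_cpow_mul_truncatedLaplaceCpow (ha : 0 < a.re) (ha1 : a.re < 1) (hz : 0 ≤ z.re)
    (hz' : z ∈ Complex.slitPlane) :
    Tendsto (fun R ↦ z ^ a * truncatedLaplaceCpow a R z) atTop (𝓝 (Complex.Gamma a)) := by
  obtain ⟨C, hC⟩ := exists_norm_truncatedLaplaceCpow_one_sub_le ha hz hz'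
  have hdecay : Tendsto (fun R : ℝ ↦ C * R ^ (a.re - 1)) atTop (𝓝 0) := by
    simpa using (tendsto_rpow_neg_atTop (sub_pos.2 ha1)).const_mul C
  have hdiff := squeeze_zero_norm' ((eventually_gt_atTop 0).mono hC) hdecay
  simpa using (tendsto_truncatedLaplaceCpow_one ha).sub hdiff

end TruncatedLaplace

/-- The Riemann–Liouville differintegral of complex order `a` with lower limit `-T`. The
distributional differintegral `𝒮 ^ a f` is its limit as `T → ∞`. -/
noncomputable def truncatedDifferintegral (a : ℂ) (T : ℝ) (f : ℝ → ℂ) (x : ℝ) : ℂ :=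
  (Complex.Gamma a)⁻¹ * ∫ τ in (-T)..x, f τ * ((x - τ : ℝ) : ℂ) ^ (a - 1)

section Differintegral

variable {a : ℂ}

lemma intervalIntegrable_mul_sub_cpow (ha : 0 < a.re) {f : ℝ → ℂ} (hf : Continuous f) (p x : ℝ) :
    IntervalIntegrable (fun τ : ℝ ↦ f τ * ((x - τ : ℝ) : ℂ) ^ (a - 1))
      MeasureTheory.volume p x := by
  have hpow := (intervalIntegral.intervalIntegrable_cpow' (r := a - 1) (by simpa using ha)
    (a := x - p) (b := 0)).comp_sub_left x
  rw [sub_sub_cancel, sub_zero] at hpow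
  exact hpow.continuousOn_mul hf.continuousOn

lemma truncatedDifferintegral_add (ha : 0 < a.re) {f g : ℝ → ℂ} (hf : Continuous f)
    (hg : Continuous g) (T x : ℝ) :
    truncatedDifferintegral a T (fun τ ↦ f τ + g τ) x =
      truncatedDifferintegral a T f x + truncatedDifferintegral a T g x := by
  simp only [truncatedDifferintegral, add_mul]
  rw [intervalIntegral.integral_add (intervalIntegrable_mul_sub_cpow ha hf _ _)
    (intervalIntegrable_mul_sub_cpow ha hg _ _), mul_add]

lemma truncatedDifferintegral_div_const (a : ℂ) (T : ℝ) (f : ℝ → ℂ) (c : ℂ) (x : ℝ) :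
    truncatedDifferintegral a T (fun τ ↦ f τ / c) x = truncatedDifferintegral a T f x / c := by
  simp only [truncatedDifferintegral, div_mul_eq_mul_div]
  rw [intervalIntegral.integral_div, mul_div_assoc]

lemma truncatedDifferintegral_ofReal {T x : ℝ} (hT : -T ≤ x) (α : ℝ) (f : ℝ → ℝ) :
    truncatedDifferintegral α T (fun τ ↦ f τ) x =
      (1 / Real.Gamma α * ∫ τ in (-T)..x, f τ * (x - τ) ^ (α - 1) : ℝ) := by
  rw [truncatedDifferintegral, Complex.Gamma_ofReal, one_div, Complex.ofReal_mul,
    ← intervalIntegral.integral_ofReal, Complex.ofReal_inv]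
  congr 1
  refine intervalIntegral.integral_congr fun τ hτ ↦ ?_
  rw [Set.uIcc_of_le hT] at hτ
  simp only [Complex.ofReal_mul, Complex.ofReal_cpow (sub_nonneg.2 hτ.2), Complex.ofReal_sub,
    Complex.ofReal_one]

lemma truncatedDifferintegral_cexp (a : ℂ) (T : ℝ) (w : ℂ) (x : ℝ) :
    truncatedDifferintegral a T (fun τ ↦ Complex.exp (w * τ)) x =
      Complex.exp (w * x) / Complex.Gamma a * truncatedLaplaceCpow a (x + T) w := by
  have hshift := intervalIntegral.integral_comp_sub_left (a := -T) (b := x)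
    (fun u : ℝ ↦ Complex.exp (w * (x - u : ℝ)) * (u : ℂ) ^ (a - 1)) x
  simp only [sub_sub_cancel, sub_self, sub_neg_eq_add] at hshift
  rw [truncatedDifferintegral, hshift, truncatedLaplaceCpow, div_eq_inv_mul, mul_assoc,
    ← intervalIntegral.integral_const_mul (Complex.exp (w * x))]
  congr 2 with u
  rw [mul_left_comm, ← Complex.exp_add, mul_comm]
  push_cast
  ring_nf

lemma tendsto_truncatedDifferintegral_cexp {w : ℂ} (ha : 0 < a.re) (ha1 : a.re < 1)
    (hw : 0 ≤ w.re) (hw' : w ∈ Complex.slitPlane) (x : ℝ) :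
    Tendsto (fun T ↦ truncatedDifferintegral a T (fun τ ↦ Complex.exp (w * τ)) x) atTop
      (𝓝 (w ^ (-a) * Complex.exp (w * x))) := by
  have hpow : w ^ a ≠ 0 := by simp [Complex.cpow_eq_zero_iff, Complex.slitPlane_ne_zero hw']
  have hlim := ((tendsto_cpow_mul_truncatedLaplaceCpow ha ha1 hw hw').comp
    (tendsto_atTop_add_const_left atTop x tendsto_id)).const_mul
    (w ^ (-a) * Complex.exp (w * x) / Complex.Gamma a)
  rw [div_mul_cancel₀ _ (Complex.Gamma_ne_zero_of_re_pos ha)] at hlim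
  refine hlim.congr fun T ↦ ?_
  rw [truncatedDifferintegral_cexp, Complex.cpow_neg, Function.comp_apply, id]
  field_simp

lemma cpow_neg_mul_cexp_add_div_two {lam : ℝ} (hlam : 0 < lam) (a x : ℂ) :
    ((lam * Complex.I) ^ (-a) * Complex.exp (lam * Complex.I * x) +
      (lam * -Complex.I) ^ (-a) * Complex.exp (lam * -Complex.I * x)) / 2 =
      (lam : ℂ) ^ (-a) * Complex.cos (lam * x - a * π / 2) := by
  have hpos : π / 2 * -a * Complex.I + lam * Complex.I * x =
      (lam * x - a * π / 2) * Complex.I := by ring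
  have hneg : -(π / 2 * -a) * Complex.I + lam * -Complex.I * x =
      -(lam * x - a * π / 2) * Complex.I := by ring
  rw [ofReal_mul_cpow hlam Complex.I_ne_zero,
    ofReal_mul_cpow hlam (neg_ne_zero.2 Complex.I_ne_zero), I_cpow, neg_I_cpow,
    mul_assoc (_ ^ _), mul_assoc (_ ^ _), ← Complex.exp_add, ← Complex.exp_add, hpos, hneg,
    ← mul_add, mul_div_assoc, Complex.cos]

theorem differintegral_cos_general {lam : ℝ} (hlam : 0 < lam) (ha : 0 < a.re) (ha1 : a.re < 1)
    (x : ℝ) :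
    Tendsto (fun T ↦ truncatedDifferintegral a T (fun τ ↦ Complex.cos (lam * τ)) x) atTop
      (𝓝 ((lam : ℂ) ^ (-a) * Complex.cos (lam * x - a * π / 2))) := by
  have hpos := tendsto_truncatedDifferintegral_cexp (w := lam * Complex.I) ha ha1 (by simp)
    (by simp [Complex.mem_slitPlane_iff, hlam.ne']) x
  have hneg := tendsto_truncatedDifferintegral_cexp (w := lam * -Complex.I) ha ha1 (by simp)
    (by simp [Complex.mem_slitPlane_iff, hlam.ne']) x
  rw [← cpow_neg_mul_cexp_add_div_two hlam]
  refine ((hpos.add hneg).div_const 2).congr fun T ↦ ?_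
  rw [← truncatedDifferintegral_add ha (by fun_prop) (by fun_prop),
    ← truncatedDifferintegral_div_const]
  congr 1 with τ
  rw [Complex.cos]
  ring_nf

end Differintegral

/-- The improper distributional differintegral of order `α ∈ (0,1)` of `cos(λz)` exists
and equals `λ^(−α) cos(λz − απ/2)`. -/
theorem differintegral_cos (lam α x : ℝ) (hlam : 0 < lam) (hα0 : 0 < α) (hα1 : α < 1) :
    Tendsto (fun T : ℝ => (1 / Real.Gamma α) * ∫ τ in (-T)..x,
        Real.cos (lam * τ) * (x - τ) ^ (α - 1)) atTop
      (𝓝 (lam ^ (-α) * Real.cos (lam * x - α * π / 2))) := by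
  have hlim := differintegral_cos_general (a := α) hlam hα0 hα1 x
  rw [← Filter.tendsto_ofReal_iff]
  push_cast [Complex.ofReal_cpow hlam.le]
  refine hlim.congr' ?_
  filter_upwards [eventually_ge_atTop (-x)] with T hT
  simpa using truncatedDifferintegral_ofReal (neg_le.1 hT) α fun τ ↦ Real.cos (lam * τ)
end
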